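/- Let n and m be positive integers with m < n, let A be an n×n real symmetric positive semidefinite matrix with rank(A) = n − m, and let B be an m×n real matrix. Let W be an invertible m×m real matrix such that A + BᵀWB is invertible. Then B(A + BᵀWB)⁻¹Bᵀ = W⁻¹. -/

import Mathlib

open Matrix

/-- If `A` is symmetric positive semidefinite with `rank A = n - m`
(maximal nullity) and `W` is invertible with `A + BᵀWB` invertible, then
`B (A + BᵀWB)⁻¹ Bᵀ = W⁻¹`. -/
theorem schur_complement_maximal_nullity {n m : ℕ} (hn : 0 < n) (hm : 0 < m) (hmn : m < n)
    (A : Matrix (Fin n) (Fin n) ℝ) (B : Matrix (Fin m) (Fin n) ℝ)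
    (W : Matrix (Fin m) (Fin m) ℝ)
    (hA : A.PosSemidef) (hrA : A.rank = n - m)
    (hW : IsUnit W) (hAW : IsUnit (A + Bᵀ * W * B)) :
    B * (A + Bᵀ * W * B)⁻¹ * Bᵀ = W⁻¹ := by
  set M := A + Bᵀ * W * B with hM
  have hMdet : IsUnit M.det := (Matrix.isUnit_iff_isUnit_det M).1 hAW
  have hMx : ∀ x : Fin n → ℝ, A *ᵥ x = 0 → M *ᵥ x = Bᵀ *ᵥ (W *ᵥ (B *ᵥ x)) := by
    intro x hx
    rw [hM, Matrix.add_mulVec, hx, zero_add]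
    simp only [Matrix.mulVec_mulVec, Matrix.mul_assoc]
  have hMM : ∀ x : Fin n → ℝ, M⁻¹ *ᵥ (M *ᵥ x) = x := by
    intro x
    rw [Matrix.mulVec_mulVec, Matrix.nonsing_inv_mul _ hMdet, Matrix.one_mulVec]
  let K := LinearMap.ker A.mulVecLin
  let f : K →ₗ[ℝ] (Fin m → ℝ) := B.mulVecLin.domRestrict K
  have hK : ∀ x : K, A *ᵥ (x : Fin n → ℝ) = 0 := fun x => by
    have := x.2
    rwa [LinearMap.mem_ker, Matrix.mulVecLin_apply] at this
  have hf : ∀ x : K, f x = B *ᵥ (x : Fin n → ℝ) := fun x => rfl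
  have hinj : Function.Injective f := by
    rw [injective_iff_map_eq_zero]
    intro x hx
    rw [hf] at hx
    have h1 := hMx x (hK x)
    rw [hx, Matrix.mulVec_zero, Matrix.mulVec_zero] at h1
    have h2 := hMM x
    rw [h1, Matrix.mulVec_zero] at h2
    exact Subtype.ext h2.symm
  have hdim : Module.finrank ℝ K = Module.finrank ℝ (Fin m → ℝ) := by
    have h := LinearMap.finrank_range_add_finrank_ker A.mulVecLin
    have h' : Module.finrank ℝ (LinearMap.range A.mulVecLin) = n - m := hrA
    rw [h'] at h
    simp only [Module.finrank_fin_fun] at h ⊢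
    change n - m + Module.finrank ℝ K = n at h
    omega
  have hsurj : Function.Surjective f :=
    (LinearMap.injective_iff_surjective_of_finrank_eq_finrank hdim).1 hinj
  have key : (B * M⁻¹ * Bᵀ) * W = 1 := by
    apply Matrix.ext_of_mulVec_single
    intro i
    obtain ⟨x, hx⟩ := hsurj (Pi.single i 1)
    rw [← hx, hf, Matrix.one_mulVec]
    conv_rhs => rw [← hMM x, hMx x (hK x)]
    simp only [Matrix.mulVec_mulVec, Matrix.mul_assoc]
  exact (Matrix.inv_eq_left_inv key).symm
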